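/- arXiv:2001.08004 — 4 statements merged into one kernel-verified Lean document; each statement's English description precedes it below -/
import Mathlib

section
/- Let b > 0, T > 0, k ≥ 0, let a : [0,ℓ] → ℝ be continuous with a > 0, let 0 = x₀ < ⋯ < x_M = ℓ be a grid, let g : [0,T] → ℝ be continuous, and for i = 1,…,M let u_i : [x_{i−1},x_i] × [0,T] → ℝ be continuously differentiable in t with u_i(·,t) a polynomial of degree ≤ k in x for each t. Define hybrid values û₀(t) = g(t) and û_i(t) = u_i(x_i,t) for i = 1,…,M−1, and assume the discrete scheme holds: for each i, each t, and every polynomial w of degree ≤ k, ∫_{x_{i−1}}^{x_i} a ∂_t u_i(x,t) w(x) dx − ∫_{x_{i−1}}^{x_i} b u_i(x,t) w'(x) dx + b u_i(x_i,t) w(x_i) − b û_{i−1}(t) w(x_{i−1}) = 0. Then for all t ∈ [0,T]: (1/2) d/dt Σ_{i=1}^M ∫_{x_{i−1}}^{x_i} a(x) u_i(x,t)² dx + (b/2) Σ_{i=1}^M (u_i(x_{i−1},t) − û_{i−1}(t))² + (b/2) u_M(ℓ,t)² = (b/2) g(t)². -/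
/-!
Testing the scheme on an element with the discrete solution itself, `w = u i · t`, turns its first
term into half the time derivative of the local energy and its second into the boundary values
`(b / 2) (u (x (i + 1))² - u (x i)²)`. Completing the square at the inflow end gives the jump and
leaves the difference of the squared hybrid values at the two ends, which telescopes over the grid.

The energy may be differentiated under the integral sign without any domination argument: since
`u²` is polynomial of degree at most `2 k` in space, it is determined by its values at `2 k + 1`
nodes, so the energy is a finite sum of functions of time with constant coefficients.
-/

/-- The discrete space of the scheme: functions given by a polynomial of degree at most `k`. A
predicate on functions rather than on `Polynomial` lets it apply to each time slice of a function of
space and time. -/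
def IsPolynomialFun {R : Type*} [Semiring R] (k : ℕ) (v : R → R) : Prop :=
  ∃ p : Polynomial R, p.natDegree ≤ k ∧ ∀ y, v y = p.eval y

namespace IsPolynomialFun

theorem pow {R : Type*} [CommSemiring R] {k : ℕ} {v : R → R} (hv : IsPolynomialFun k v) (n : ℕ) :
    IsPolynomialFun (n * k) (fun y => v y ^ n) := by
  obtain ⟨p, hp, hvp⟩ := hv
  exact ⟨p ^ n, Polynomial.natDegree_pow_le_of_le n hp,
    fun y => by simp only [hvp, Polynomial.eval_pow]⟩

theorem eq_sum_lagrangeBasis {F ι : Type*} [Field F] [DecidableEq ι] {k : ℕ} {v : F → F}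
    (hv : IsPolynomialFun k v) {s : Finset ι} {node : ι → F} (hnode : Set.InjOn node s)
    (hs : k < s.card) (y : F) :
    v y = ∑ j ∈ s, v (node j) * (Lagrange.basis s node j).eval y := by
  obtain ⟨p, hp, hvp⟩ := hv
  have hdeg : p.degree < s.card :=
    (Polynomial.natDegree_le_iff_degree_le.mp hp).trans_lt (by exact_mod_cast hs)
  simp only [hvp]
  conv_lhs => rw [Lagrange.eq_interpolate hnode hdeg]
  simp only [Lagrange.interpolate_apply, Polynomial.eval_finsetSum, Polynomial.eval_mul,
    Polynomial.eval_C]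

end IsPolynomialFun

section Calculus

open MeasureTheory

theorem hasDerivAt_intervalIntegral_sum_smul {ι E : Type*} [NormedAddCommGroup E] [NormedSpace ℝ E]
    {μ : Measure ℝ} {p q t : ℝ} {s : Finset ι} {c : ι → ℝ → ℝ} {c' : ι → ℝ} {f : ι → ℝ → E}
    (hf : ∀ j ∈ s, IntervalIntegrable (f j) μ p q) (hc : ∀ j ∈ s, HasDerivAt (c j) (c' j) t) :
    HasDerivAt (fun τ => ∫ y in p..q, ∑ j ∈ s, c j τ • f j y ∂μ)
      (∫ y in p..q, ∑ j ∈ s, c' j • f j y ∂μ) t := by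
  have integral_sum (d : ι → ℝ) :
      ∫ y in p..q, ∑ j ∈ s, d j • f j y ∂μ = ∑ j ∈ s, d j • ∫ y in p..q, f j y ∂μ := by
    rw [intervalIntegral.integral_finsetSum (f := fun j y => d j • f j y)
      fun j hj => (hf j hj).smul (d j)]
    simp only [intervalIntegral.integral_smul]
  simp only [integral_sum]
  exact HasDerivAt.fun_sum fun j hj => (hc j hj).smul_const _

theorem hasDerivAt_intervalIntegral_mul_of_isPolynomialFun {μ : Measure ℝ} {n : ℕ} {p q t : ℝ}
    {a : ℝ → ℝ} (ha : IntervalIntegrable a μ p q) {F : ℝ → ℝ → ℝ} {F' : ℝ → ℝ}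
    (hF : ∀ τ, IsPolynomialFun n (fun y => F y τ)) (hF' : ∀ y, HasDerivAt (F y) (F' y) t) :
    HasDerivAt (fun τ => ∫ y in p..q, a y * F y τ ∂μ) (∫ y in p..q, a y * F' y ∂μ) t := by
  let nodes := Finset.range (n + 1)
  let L (j : ℕ) (y : ℝ) : ℝ := (Lagrange.basis nodes (fun j : ℕ => (j : ℝ)) j).eval y
  have F_eq (y τ : ℝ) : F y τ = ∑ j ∈ nodes, F j τ * L j y :=
    (hF τ).eq_sum_lagrangeBasis Nat.cast_injective.injOn (by simp [nodes]) y
  have F'_eq (y : ℝ) : F' y = ∑ j ∈ nodes, F' j * L j y := by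
    refine (hF' y).unique ?_
    rw [funext (F_eq y)]
    exact HasDerivAt.fun_sum fun j _ => (hF' j).mul_const _
  have weighted_eq {G : ℝ → ℝ} (hG : ∀ y, G y = ∑ j ∈ nodes, G j * L j y) (y : ℝ) :
      a y * G y = ∑ j ∈ nodes, G j • (a y * L j y) := by
    rw [hG y, Finset.mul_sum]
    simp only [smul_eq_mul, mul_left_comm]
  simp only [weighted_eq (F_eq · _), weighted_eq F'_eq]
  exact hasDerivAt_intervalIntegral_sum_smul
    (fun j _ => ha.mul_continuousOn (Polynomial.continuousOn _)) fun j _ => hF' j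

theorem intervalIntegral_self_mul_deriv {f f' : ℝ → ℝ} {p q : ℝ}
    (hf : ∀ y ∈ Set.uIcc p q, HasDerivAt f (f' y) y) (hf' : IntervalIntegrable f' volume p q) :
    ∫ y in p..q, f y * f' y = (f q ^ 2 - f p ^ 2) / 2 := by
  have parts := intervalIntegral.integral_mul_deriv_eq_deriv_mul hf hf hf' hf'
  simp only [mul_comm (f' _)] at parts
  linear_combination parts / 2

end Calculus

theorem uIcc_subset_Icc_of_le_succ {α : Type*} [Lattice α] {x : ℕ → α} {M : ℕ}
    (hx : ∀ i < M, x i ≤ x (i + 1)) {i : ℕ} (hi : i < M) :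
    Set.uIcc (x i) (x (i + 1)) ⊆ Set.Icc (x 0) (x M) := by
  have hmono : MonotoneOn x (Set.Icc 0 M) :=
    monotoneOn_of_le_add_one Set.ordConnected_Icc fun j _ _ hj => hx j hj.2
  exact Set.uIcc_subset_Icc (hmono.mapsTo_Icc ⟨i.zero_le, hi.le⟩)
    (hmono.mapsTo_Icc ⟨(i + 1).zero_le, hi⟩)

/-- The hybrid value `û_i` at the grid point `x i`: the inflow datum `γ` at `x 0`, and at the later
grid points the trace from the left. Element `i` is `[x i, x (i + 1)]`, so the element to the left
of `x i` has index `i - 1`. -/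
def hybridValue (x : ℕ → ℝ) (γ : ℝ) (v : ℕ → ℝ → ℝ) (i : ℕ) : ℝ :=
  if i = 0 then γ else v (i - 1) (x i)

@[simp]
theorem hybridValue_zero (x : ℕ → ℝ) (γ : ℝ) (v : ℕ → ℝ → ℝ) : hybridValue x γ v 0 = γ :=
  if_pos rfl

@[simp]
theorem hybridValue_succ (x : ℕ → ℝ) (γ : ℝ) (v : ℕ → ℝ → ℝ) (i : ℕ) :
    hybridValue x γ v (i + 1) = v i (x (i + 1)) :=
  if_neg i.succ_ne_zero

section ElementEnergy

open MeasureTheory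

/-- The upwind discontinuous Galerkin form of `f + (b v)' = 0` on the element `[p, q]`, with inflow
value `h` at `p` and test polynomials of degree at most `k`. The transport scheme is the case
`f = a ∂ₜu`. -/
def IsUpwindSolution (k : ℕ) (b p q h : ℝ) (f v : ℝ → ℝ) : Prop :=
  ∀ w : Polynomial ℝ, w.natDegree ≤ k →
    (∫ y in p..q, f y * w.eval y) - (∫ y in p..q, b * v y * w.derivative.eval y)
      + b * v q * w.eval q - b * h * w.eval p = 0

theorem IsUpwindSolution.two_mul_integral_mul_self {k : ℕ} {b p q h : ℝ} {f v : ℝ → ℝ}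
    (hv : IsPolynomialFun k v) (hscheme : IsUpwindSolution k b p q h f v) :
    2 * ∫ y in p..q, f y * v y = b * (h ^ 2 - v q ^ 2 - (v p - h) ^ 2) := by
  obtain ⟨w, hw, hvw⟩ := hv
  obtain rfl : v = fun y => w.eval y := funext hvw
  have tested := hscheme w hw
  have flux : ∫ y in p..q, w.eval y * w.derivative.eval y = (w.eval q ^ 2 - w.eval p ^ 2) / 2 :=
    intervalIntegral_self_mul_deriv (fun y _ => w.hasDerivAt y)
      (w.derivative.continuous.intervalIntegrable p q)
  simp only [mul_assoc b, intervalIntegral.integral_const_mul, flux] at tested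
  linear_combination 2 * tested

theorem IsUpwindSolution.hasDerivAt_energy {k : ℕ} {b p q h t : ℝ} {a : ℝ → ℝ} {u : ℝ → ℝ → ℝ}
    (ha : IntervalIntegrable a volume p q) (hdiff : ∀ y, DifferentiableAt ℝ (u y) t)
    (hpoly : ∀ τ, IsPolynomialFun k (fun y => u y τ))
    (hscheme : IsUpwindSolution k b p q h (fun y => a y * deriv (u y) t) (fun y => u y t)) :
    HasDerivAt (fun τ => ∫ y in p..q, a y * u y τ ^ 2)
      (b * (h ^ 2 - u q t ^ 2 - (u p t - h) ^ 2)) t := by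
  have leibniz := hasDerivAt_intervalIntegral_mul_of_isPolynomialFun ha
    (fun τ => (hpoly τ).pow 2) fun y => (hdiff y).hasDerivAt.fun_pow 2
  refine leibniz.congr_deriv ?_
  rw [← hscheme.two_mul_integral_mul_self (hpoly t), ← intervalIntegral.integral_const_mul]
  congr 1 with y
  ring

end ElementEnergy

theorem stmt_14_general {b γ t : ℝ} {k M : ℕ} {a : ℝ → ℝ} {x : ℕ → ℝ} {u : ℕ → ℝ → ℝ → ℝ}
    (hM : 1 ≤ M) (ha : ∀ i < M, IntervalIntegrable a MeasureTheory.volume (x i) (x (i + 1)))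
    (hdiff : ∀ i < M, ∀ y, DifferentiableAt ℝ (u i y) t)
    (hpoly : ∀ i < M, ∀ τ, IsPolynomialFun k (fun y => u i y τ))
    (hscheme : ∀ i < M, IsUpwindSolution k b (x i) (x (i + 1))
      (hybridValue x γ (fun j y => u j y t) i)
      (fun y => a y * deriv (u i y) t) (fun y => u i y t)) :
    HasDerivAt
      (fun τ => (1 / 2 : ℝ) * ∑ i ∈ Finset.range M, ∫ y in x i..x (i + 1), a y * u i y τ ^ 2)
      (b / 2 * γ ^ 2
        - b / 2 * ∑ i ∈ Finset.range M,
            (u i (x i) t - hybridValue x γ (fun j y => u j y t) i) ^ 2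
        - b / 2 * u (M - 1) (x M) t ^ 2) t := by
  set û := hybridValue x γ (fun j y => u j y t) with hû
  have local_energy (i : ℕ) (hi : i ∈ Finset.range M) :
      HasDerivAt (fun τ => ∫ y in x i..x (i + 1), a y * u i y τ ^ 2)
        (b * (û i ^ 2 - û (i + 1) ^ 2 - (u i (x i) t - û i) ^ 2)) t := by
    have hi := Finset.mem_range.mp hi
    simpa only [hû, hybridValue_succ] using
      (hscheme i hi).hasDerivAt_energy (ha i hi) (hdiff i hi) (hpoly i hi)
  have outflow : û M = u (M - 1) (x M) t := if_neg (Nat.one_le_iff_ne_zero.mp hM)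
  refine ((HasDerivAt.fun_sum local_energy).const_mul (1 / 2 : ℝ)).congr_deriv ?_
  rw [← Finset.mul_sum, Finset.sum_sub_distrib, Finset.sum_range_sub' (fun i => û i ^ 2), outflow,
    hû, hybridValue_zero]
  ring

/-- Discrete energy identity for the hybrid dG semi-discretization of the transport
equation on a single edge `[0,ℓ]` with flow in positive direction (`b > 0`) and inflow
data `g`: the energy dissipation consists of the upwind jump terms and the outflow term,
balanced by the inflow source `(b/2) g²`. The hybrid values are `g t` at the inflow
vertex and the upwind traces `u (i-1) (x i) t` at the interior grid points. -/
theorem stmt_14 (b ℓ T : ℝ) (hb : 0 < b) (hT : 0 < T) (k : ℕ)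
    (a : ℝ → ℝ) (ha : ContinuousOn a (Set.Icc 0 ℓ))
    (hapos : ∀ y ∈ Set.Icc 0 ℓ, 0 < a y)
    (M : ℕ) (hM : 1 ≤ M) (x : ℕ → ℝ) (hx0 : x 0 = 0) (hxM : x M = ℓ)
    (hmono : ∀ i < M, x i < x (i + 1))
    (g : ℝ → ℝ) (hg : ContinuousOn g (Set.Icc 0 T))
    (u : ℕ → ℝ → ℝ → ℝ)
    (hsm : ∀ i < M, ∀ y, ContDiff ℝ 1 (fun t => u i y t))
    (hpoly : ∀ i < M, ∀ t, ∃ p : Polynomial ℝ,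
      p.natDegree ≤ k ∧ ∀ y, u i y t = Polynomial.eval y p)
    (hscheme : ∀ t ∈ Set.Icc 0 T, ∀ i < M, ∀ w : Polynomial ℝ, w.natDegree ≤ k →
      (∫ y in x i..x (i + 1), a y * deriv (fun s => u i y s) t * Polynomial.eval y w)
        - (∫ y in x i..x (i + 1), b * u i y t * Polynomial.eval y (Polynomial.derivative w))
        + b * u i (x (i + 1)) t * Polynomial.eval (x (i + 1)) w
        - b * (if i = 0 then g t else u (i - 1) (x i) t) * Polynomial.eval (x i) w = 0) :
    ∀ t ∈ Set.Icc 0 T,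
      HasDerivAt
        (fun s => (1 / 2 : ℝ) * ∑ i ∈ Finset.range M,
          ∫ y in x i..x (i + 1), a y * u i y s ^ 2)
        (b / 2 * g t ^ 2
          - b / 2 * ∑ i ∈ Finset.range M,
              (u i (x i) t - (if i = 0 then g t else u (i - 1) (x i) t)) ^ 2
          - b / 2 * u (M - 1) ℓ t ^ 2) t := by
  intro t ht
  subst hxM
  have cell_subset (i : ℕ) (hi : i < M) : Set.uIcc (x i) (x (i + 1)) ⊆ Set.Icc 0 (x M) :=
    hx0 ▸ uIcc_subset_Icc_of_le_succ (fun j hj => (hmono j hj).le) hi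
  exact stmt_14_general hM (fun i hi => (ha.mono (cell_subset i hi)).intervalIntegrable)
    (fun i hi y => (hsm i hi y).differentiable one_ne_zero t) hpoly (hscheme t ht)
end

section
/- Consider a directed network: finite vertex set V, finite edge set E, each edge e with a start and an end vertex in V (incidence n^e(v) = −1 at the start, +1 at the end, 0 otherwise) and length ℓ^e > 0, continuous a^e : [0,ℓ^e] → ℝ with a^e ≥ a₀ > 0, and constant b^e ≠ 0; assume flow conservation Σ_{e∈E(v)} b^e n^e(v) = 0 at every inner vertex v ∈ V₀. Let (u^e, û^v) be a classical solution of the network transport problem on [0,T]. Then for all t ∈ [0,T]: d/dt Σ_{e∈E} ∫_0^{ℓ^e} a^e(x) u^e(x,t) dx = −Σ_{v∈V_∂} Σ_{e∈E(v)} b^e n^e(v) u^e(v,t), i.e. the total mass changes only through the fluxes at the boundary vertices. -/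
open Finset

/-- Incidence of edge `e` at vertex `v`: `+1` at the end vertex, `−1` at the start
vertex, `0` otherwise. -/
def incid {V E : Type*} [DecidableEq V] (src tgt : E → V) (e : E) (v : V) : ℝ :=
  (if tgt e = v then (1 : ℝ) else 0) - (if src e = v then (1 : ℝ) else 0)

/-- The set `E(v)` of edges incident to the vertex `v`. -/
def edgesAt {V E : Type*} [DecidableEq V] [Fintype E] (src tgt : E → V) (v : V) :
    Finset E :=
  Finset.univ.filter fun e => src e = v ∨ tgt e = v

/-- The inner vertices `V₀ = {v : |E(v)| ≥ 2}`. -/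
def innerV {V E : Type*} [DecidableEq V] [Fintype V] [Fintype E] (src tgt : E → V) :
    Finset V :=
  Finset.univ.filter fun v => 2 ≤ (edgesAt src tgt v).card

/-- The boundary vertices `V_∂ = V \ V₀`. -/
def bdryV {V E : Type*} [DecidableEq V] [Fintype V] [Fintype E] (src tgt : E → V) :
    Finset V :=
  Finset.univ.filter fun v => (edgesAt src tgt v).card < 2

/-- The edges `E_in(v)` producing flow into the vertex `v`. -/
noncomputable def einEdges {V E : Type*} [DecidableEq V] [Fintype E]
    (src tgt : E → V) (b : E → ℝ) (v : V) : Finset E :=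
  (edgesAt src tgt v).filter fun e => 0 < b e * incid src tgt e v

/-- The edges `E_out(v)` producing flow out of the vertex `v`. -/
noncomputable def eoutEdges {V E : Type*} [DecidableEq V] [Fintype E]
    (src tgt : E → V) (b : E → ℝ) (v : V) : Finset E :=
  (edgesAt src tgt v).filter fun e => b e * incid src tgt e v < 0

/-- The inflow boundary vertices `V_∂^in`. -/
noncomputable def inflowBdry {V E : Type*} [DecidableEq V] [Fintype V] [Fintype E]
    (src tgt : E → V) (b : E → ℝ) : Finset V :=
  (bdryV src tgt).filter fun v =>
    ∃ e ∈ edgesAt src tgt v, b e * incid src tgt e v < 0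

/-- The outflow boundary vertices `V_∂^out`. -/
noncomputable def outflowBdry {V E : Type*} [DecidableEq V] [Fintype V] [Fintype E]
    (src tgt : E → V) (b : E → ℝ) : Finset V :=
  (bdryV src tgt).filter fun v =>
    ∃ e ∈ edgesAt src tgt v, 0 < b e * incid src tgt e v

/-- The trace `u^e(v,t)` of the edge function `u e` at the vertex `v`:
`u e (ℓ e) t` if `v` is the end vertex of `e` and `u e 0 t` otherwise. -/
def vtxTrace {V E : Type*} [DecidableEq V] (tgt : E → V) (ℓ : E → ℝ)
    (u : E → ℝ → ℝ → ℝ) (e : E) (v : V) (t : ℝ) : ℝ :=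
  if tgt e = v then u e (ℓ e) t else u e 0 t

/-!
On each edge, differentiating the mass under the integral sign, the equation and the fundamental
theorem of calculus turn the change of mass into the difference of the fluxes at the two ends.
Regrouped by vertices, these differences become the sum over all vertices of the fluxes into them.
At an inner vertex the outgoing traces equal the mixing value `û`, and the mixing condition says
that the incoming traces may be replaced by `û` too; the flux is then `û` times
`∑ b n`, which vanishes. Only boundary vertices remain.
-/

section EdgeMass

open MeasureTheory
open scoped Interval

variable {F : Type*} [NormedAddCommGroup F] [NormedSpace ℝ F]

theorem hasDerivAt_integral_smul_of_continuous_deriv {μ : Measure ℝ} {w : ℝ → ℝ}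
    {f f' : ℝ → ℝ → F} {p q : ℝ} (t : ℝ) (hw : IntervalIntegrable w μ p q)
    (hf : ∀ s, Continuous fun y => f y s) (hderiv : ∀ y s, HasDerivAt (f y) (f' y s) s)
    (hf' : Continuous (Function.uncurry f')) :
    HasDerivAt (fun s => ∫ y in p..q, w y • f y s ∂μ) (∫ y in p..q, w y • f' y t ∂μ) t := by
  have integrable_smul : ∀ h : ℝ → F, Continuous h →
      IntervalIntegrable (fun y => w y • h y) μ p q :=
    fun h hh => hw.smul_continuousOn hh.continuousOn
  obtain ⟨C, hC⟩ := (isCompact_uIcc.prod isCompact_Icc).exists_bound_of_continuousOn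
    (s := [[p, q]] ×ˢ Set.Icc (t - 1) (t + 1)) hf'.continuousOn
  have hbound : ∀ y ∈ Ι p q, ∀ s ∈ Set.Icc (t - 1) (t + 1), ‖w y • f' y s‖ ≤ ‖w y‖ * C := by
    intro y hy s hs
    rw [norm_smul]
    exact mul_le_mul_of_nonneg_left (hC (y, s) ⟨Set.uIoc_subset_uIcc hy, hs⟩) (norm_nonneg _)
  exact (intervalIntegral.hasDerivAt_integral_of_dominated_loc_of_deriv_le
    (F := fun s y => w y • f y s) (F' := fun s y => w y • f' y s)
    (Icc_mem_nhds (sub_one_lt t) (lt_add_one t))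
    (.of_forall fun s => (integrable_smul _ (hf s)).def'.aestronglyMeasurable)
    (integrable_smul _ (hf t))
    (integrable_smul _ (hf'.uncurry_right t)).def'.aestronglyMeasurable
    (.of_forall hbound)
    (hw.norm.mul_const C)
    (.of_forall fun y _ s _ => (hderiv y s).const_smul (w y))).2

theorem hasDerivAt_integral_smul_of_contDiff {μ : Measure ℝ} {w : ℝ → ℝ} {u : ℝ → ℝ → F}
    {p q : ℝ} (t : ℝ) (hw : IntervalIntegrable w μ p q)
    (hu : ContDiff ℝ 1 (Function.uncurry u)) :
    HasDerivAt (fun s => ∫ y in p..q, w y • u y s ∂μ) (∫ y in p..q, w y • deriv (u y) t ∂μ) t := by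
  refine hasDerivAt_integral_smul_of_continuous_deriv t hw hu.continuous.uncurry_right ?_ ?_
  · intro y s
    exact ((hu.comp (contDiff_prodMk_right y)).differentiable one_ne_zero s).hasDerivAt
  · have hslices : ContDiff ℝ 1 (Function.uncurry fun z : ℝ × ℝ => u z.1) :=
      hu.comp (contDiff_fst.fst.prodMk contDiff_snd)
    exact (Continuous.fderiv hslices continuous_snd le_rfl).clm_apply continuous_const

theorem hasDerivAt_integral_smul_of_transport [CompleteSpace F] {a : ℝ → ℝ} {b p q t : ℝ}
    {u : ℝ → ℝ → F} (ha : IntervalIntegrable a volume p q)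
    (hu : ContDiff ℝ 1 (Function.uncurry u))
    (hpde : ∀ᵐ y, y ∈ Ι p q → a y • deriv (u y) t + b • deriv (fun z => u z t) y = 0) :
    HasDerivAt (fun s => ∫ y in p..q, a y • u y s) (-(b • (u q t - u p t))) t := by
  have hslice : ContDiff ℝ 1 fun z => u z t := hu.comp (contDiff_prodMk_left t)
  refine (hasDerivAt_integral_smul_of_contDiff t ha hu).congr_deriv ?_
  calc ∫ y in p..q, a y • deriv (u y) t
      = ∫ y in p..q, -(b • deriv (fun z => u z t) y) :=
        intervalIntegral.integral_congr_ae
          (hpde.mono fun y hy hmem => eq_neg_of_add_eq_zero_left (hy hmem))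
    _ = -(b • (u q t - u p t)) := by
        rw [intervalIntegral.integral_neg, intervalIntegral.integral_smul,
          intervalIntegral.integral_deriv_of_contDiffOn_uIcc hslice.contDiffOn]

end EdgeMass

theorem sum_mul_eq_zero_of_mixing {ι R : Type*} [Ring R] [LinearOrder R] {s : Finset ι}
    {c x : ι → R} {w : R} (hcons : ∑ i ∈ s, c i = 0) (hout : ∀ i ∈ s, c i < 0 → x i = w)
    (hmix : (∑ i ∈ s with 0 < c i, c i) * w = ∑ i ∈ s with 0 < c i, c i * x i) :
    ∑ i ∈ s, c i * x i = 0 := by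
  have pos_of_ne : ∀ i ∈ s, c i * (x i - w) ≠ 0 → 0 < c i := by
    intro i hi hne
    refine lt_of_not_ge fun hle => hne ?_
    rcases hle.lt_or_eq with hneg | hzero
    · rw [hout i hi hneg, sub_self, mul_zero]
    · rw [hzero, zero_mul]
  calc ∑ i ∈ s, c i * x i
      = ∑ i ∈ s, c i * (x i - w) := by
        simp only [mul_sub, sum_sub_distrib, ← sum_mul, hcons, zero_mul, sub_zero]
    _ = ∑ i ∈ s with 0 < c i, c i * (x i - w) := (sum_filter_of_ne pos_of_ne).symm
    _ = 0 := by simp only [mul_sub, sum_sub_distrib, ← sum_mul, hmix, sub_self]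

section Network

variable {V E : Type*} [DecidableEq V] {src tgt : E → V}

theorem sum_bdryV_eq_sum_univ [Fintype V] [Fintype E] {M : Type*} [AddCommMonoid M]
    {f : V → M} (hf : ∀ v ∈ innerV src tgt, f v = 0) : ∑ v ∈ bdryV src tgt, f v = ∑ v, f v :=
  sum_filter_of_ne fun v _ hne =>
    lt_of_not_ge fun hcard => hne (hf v (mem_filter.2 ⟨mem_univ v, hcard⟩))

theorem sum_incid_mul [Fintype V] (e : E) (f : V → ℝ) :
    ∑ v, incid src tgt e v * f v = f (tgt e) - f (src e) := by
  simp [incid, sub_mul, sum_sub_distrib]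

theorem sum_edgesAt_incid_mul [Fintype E] (v : V) (f : E → ℝ) :
    ∑ e ∈ edgesAt src tgt v, incid src tgt e v * f e = ∑ e, incid src tgt e v * f e := by
  refine sum_filter_of_ne fun e _ hne => ?_
  contrapose! hne
  simp [incid, hne]

theorem sum_sum_edgesAt_incid_mul [Fintype V] [Fintype E] (f : E → V → ℝ) :
    ∑ v, ∑ e ∈ edgesAt src tgt v, incid src tgt e v * f e v
      = ∑ e, (f e (tgt e) - f e (src e)) := by
  simp only [sum_edgesAt_incid_mul]
  rw [sum_comm]
  simp only [sum_incid_mul]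

theorem sum_sum_edgesAt_flux [Fintype V] [Fintype E] (hloop : ∀ e, src e ≠ tgt e)
    (ℓ b : E → ℝ) (u : E → ℝ → ℝ → ℝ) (t : ℝ) :
    ∑ v, ∑ e ∈ edgesAt src tgt v, b e * incid src tgt e v * vtxTrace tgt ℓ u e v t
      = ∑ e, b e * (u e (ℓ e) t - u e 0 t) := by
  have trace_tgt : ∀ e, vtxTrace tgt ℓ u e (tgt e) t = u e (ℓ e) t := fun e => if_pos rfl
  have trace_src : ∀ e, vtxTrace tgt ℓ u e (src e) t = u e 0 t := fun e => if_neg (hloop e).symm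
  simp only [mul_comm (b _) (incid _ _ _ _), mul_assoc, sum_sum_edgesAt_incid_mul, trace_tgt,
    trace_src, mul_sub]

end Network

theorem stmt_15_general {V E : Type*} [Fintype V] [Fintype E] [DecidableEq V]
    {src tgt : E → V} (hloop : ∀ e, src e ≠ tgt e) {ℓ : E → ℝ} {a : E → ℝ → ℝ}
    (ha : ∀ e, IntervalIntegrable (a e) MeasureTheory.volume 0 (ℓ e)) {b : E → ℝ}
    (hcons : ∀ v ∈ innerV src tgt, ∑ e ∈ edgesAt src tgt v, b e * incid src tgt e v = 0)
    {u : E → ℝ → ℝ → ℝ} (hu : ∀ e, ContDiff ℝ 1 (Function.uncurry (u e)))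
    {t : ℝ} {w : V → ℝ}
    (hpde : ∀ e, ∀ᵐ y, y ∈ Set.uIoc 0 (ℓ e) →
      a e y * deriv (u e y) t + b e * deriv (fun z => u e z t) y = 0)
    (hcouple : ∀ v ∈ innerV src tgt, ∀ e ∈ eoutEdges src tgt b v, vtxTrace tgt ℓ u e v t = w v)
    (hmix : ∀ v ∈ innerV src tgt,
      (∑ e ∈ einEdges src tgt b v, b e * incid src tgt e v) * w v
        = ∑ e ∈ einEdges src tgt b v, b e * incid src tgt e v * vtxTrace tgt ℓ u e v t) :
    HasDerivAt (fun s => ∑ e : E, ∫ y in (0 : ℝ)..(ℓ e), a e y * u e y s)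
      (-∑ v ∈ bdryV src tgt, ∑ e ∈ edgesAt src tgt v,
        b e * incid src tgt e v * vtxTrace tgt ℓ u e v t) t := by
  have flux_inner : ∀ v ∈ innerV src tgt, ∑ e ∈ edgesAt src tgt v,
      b e * incid src tgt e v * vtxTrace tgt ℓ u e v t = 0 := fun v hv =>
    sum_mul_eq_zero_of_mixing (hcons v hv)
      (fun e he hneg => hcouple v hv e (mem_filter.2 ⟨he, hneg⟩)) (hmix v hv)
  rw [sum_bdryV_eq_sum_univ flux_inner, sum_sum_edgesAt_flux hloop, ← sum_neg_distrib]
  exact HasDerivAt.fun_sum fun e _ =>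
    hasDerivAt_integral_smul_of_transport (ha e) (hu e) (hpde e)

/-- Conservation of mass for transport on a network: for a classical solution of the
network transport problem, the total mass changes only through the fluxes at the
boundary vertices. -/
theorem stmt_15 {V E : Type*} [Fintype V] [Fintype E] [DecidableEq V] [DecidableEq E]
    (src tgt : E → V) (hloop : ∀ e, src e ≠ tgt e)
    (ℓ : E → ℝ) (hℓ : ∀ e, 0 < ℓ e)
    (a : E → ℝ → ℝ) (a₀ : ℝ) (ha₀ : 0 < a₀)
    (ha : ∀ e, ContinuousOn (a e) (Set.Icc 0 (ℓ e)))
    (haa : ∀ e, ∀ y ∈ Set.Icc 0 (ℓ e), a₀ ≤ a e y)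
    (b : E → ℝ) (hb : ∀ e, b e ≠ 0)
    (hcons : ∀ v ∈ innerV src tgt,
      ∑ e ∈ edgesAt src tgt v, b e * incid src tgt e v = 0)
    (T : ℝ) (hT : 0 < T)
    (u : E → ℝ → ℝ → ℝ) (uhat : V → ℝ → ℝ) (g : V → ℝ → ℝ)
    (hg : ∀ v, ContinuousOn (g v) (Set.Icc 0 T))
    (hu : ∀ e, ContDiff ℝ 1 (fun p : ℝ × ℝ => u e p.1 p.2))
    (huhat : ∀ v, ContinuousOn (uhat v) (Set.Icc 0 T))
    (hpde : ∀ e, ∀ y ∈ Set.Icc 0 (ℓ e), ∀ t ∈ Set.Icc 0 T,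
      a e y * deriv (fun s => u e y s) t + b e * deriv (fun z => u e z t) y = 0)
    (hcouple : ∀ v : V, ∀ e ∈ eoutEdges src tgt b v, ∀ t ∈ Set.Icc 0 T,
      vtxTrace tgt ℓ u e v t = uhat v t)
    (hinflow : ∀ v ∈ inflowBdry src tgt b, ∀ t ∈ Set.Icc 0 T, uhat v t = g v t)
    (hmix : ∀ v ∈ innerV src tgt ∪ outflowBdry src tgt b, ∀ t ∈ Set.Icc 0 T,
      (∑ e ∈ einEdges src tgt b v, b e * incid src tgt e v) * uhat v t
        = ∑ e ∈ einEdges src tgt b v, b e * incid src tgt e v * vtxTrace tgt ℓ u e v t) :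
    ∀ t ∈ Set.Icc 0 T,
      HasDerivAt (fun s => ∑ e : E, ∫ y in (0 : ℝ)..(ℓ e), a e y * u e y s)
        (-∑ v ∈ bdryV src tgt, ∑ e ∈ edgesAt src tgt v,
          b e * incid src tgt e v * vtxTrace tgt ℓ u e v t) t := by
  intro t ht
  exact stmt_15_general hloop
    (fun e => ContinuousOn.intervalIntegrable_of_Icc (hℓ e).le (ha e)) hcons hu
    (fun e => .of_forall fun y hy =>
      hpde e y (Set.Ioc_subset_Icc_self (Set.uIoc_of_le (hℓ e).le ▸ hy)) t ht)
    (fun v _ e he => hcouple v e he t ht)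
    (fun v hv => hmix v (mem_union_left _ hv) t ht)
end

section
/- Consider a directed network: finite vertex set V, finite edge set E, each edge e with a start and an end vertex in V (incidence n^e(v) = −1 at the start, +1 at the end, 0 otherwise) and length ℓ^e > 0, continuous a^e : [0,ℓ^e] → ℝ with a^e ≥ a₀ > 0, and constant b^e ≠ 0; assume flow conservation Σ_{e∈E(v)} b^e n^e(v) = 0 at every inner vertex v ∈ V₀. Let (u^e, û^v) be a classical solution of the network transport problem on [0,T] with inflow data g^v. Then for all t ∈ [0,T]: d/dt Σ_{e∈E} ∫_0^{ℓ^e} a^e(x) u^e(x,t)² dx = −Σ_{v∈V_∂^out} |b^e n^e(v)| u^e(v,t)² + Σ_{v∈V_∂^in} |b^e n^e(v)| g^v(t)² − Σ_{v∈V₀} Σ_{e∈E_in(v)} |b^e n^e(v)| (u^e(v,t) − û^v(t))², where in the boundary sums e denotes the unique edge incident to the boundary vertex v. -/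
open Finset

/-!
The transport equation turns the time derivative of the energy density `a u²` into the space
derivative of `-b u²`, so the energy of an edge changes only through its two end points.
Regrouping the end points by vertices, the energy loss is the sum over the vertices of
`∑ b n u²`, where `n` is the incidence and the inner sum is over the incident edges. At a
boundary vertex this sum has at most one term. At an inner vertex, flow conservation gives
`∑ b n = 0`, and mixing together with coupling gives `∑ b n (u - û) = 0`; hence `u²` may be
replaced by `(u - û)²`, which vanishes on the outgoing edges.
-/

section Calculus

variable {𝕜 F : Type*} [RCLike 𝕜] [NormedAddCommGroup F] [NormedSpace 𝕜 F]

theorem hasDerivAt_intervalIntegral_of_continuousOn [NormedSpace ℝ F] {G G' : 𝕜 → ℝ → F}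
    {p q : ℝ} {t : 𝕜} {U : Set 𝕜} (hU : U ∈ nhds t)
    (hG : ∀ s ∈ U, ContinuousOn (G s) (Set.uIcc p q))
    (hG' : ContinuousOn (fun z : 𝕜 × ℝ => G' z.1 z.2) (U ×ˢ Set.uIcc p q))
    (hderiv : ∀ s ∈ U, ∀ y ∈ Set.uIcc p q, HasDerivAt (fun r => G r y) (G' s y) s) :
    HasDerivAt (fun s => ∫ y in p..q, G s y) (∫ y in p..q, G' t y) t := by
  obtain ⟨K, hK, hKU, hKcompact⟩ := local_compact_nhds hU
  obtain ⟨C, hC⟩ := (hKcompact.prod isCompact_uIcc).exists_bound_of_continuousOn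
    (hG'.mono (Set.prod_mono_left hKU))
  have hG't : ContinuousOn (G' t) (Set.uIcc p q) :=
    hG'.comp (by fun_prop) fun y hy => Set.mk_mem_prod (mem_of_mem_nhds hU) hy
  refine (intervalIntegral.hasDerivAt_integral_of_dominated_loc_of_deriv_le
    (bound := fun _ => C) hK ?_ (hG t (mem_of_mem_nhds hU)).intervalIntegrable
    hG't.intervalIntegrable.aestronglyMeasurable_restrict_uIoc
    (.of_forall fun y hy s hs => hC (s, y) ⟨hs, Set.uIoc_subset_uIcc hy⟩)
    intervalIntegrable_const
    (.of_forall fun y hy s hs => hderiv s (hKU hs) y (Set.uIoc_subset_uIcc hy))).2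
  filter_upwards [hU] with s hs
  exact (hG s hs).intervalIntegrable.aestronglyMeasurable_restrict_uIoc

theorem continuous_deriv_right_of_contDiff_uncurry {X : Type*} [NormedAddCommGroup X]
    [NormedSpace 𝕜 X] {f : X → 𝕜 → F} (hf : ContDiff 𝕜 1 (fun z : X × 𝕜 => f z.1 z.2)) :
    Continuous (fun z : X × 𝕜 => deriv (f z.1) z.2) := by
  have hfderiv : ContDiff 𝕜 0 (fun z : X × 𝕜 => fderiv 𝕜 (f z.1) z.2) :=
    ContDiff.fderiv (f := fun z : X × 𝕜 => f z.1) (by fun_prop) contDiff_snd (by norm_num)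
  exact hfderiv.continuous.clm_apply continuous_const

theorem hasDerivAt_integral_mul_sq {a : ℝ → ℝ} {p q : ℝ} {u : ℝ → ℝ → ℝ}
    (ha : ContinuousOn a (Set.uIcc p q)) (hu : ContDiff ℝ 1 (fun z : ℝ × ℝ => u z.1 z.2))
    (t : ℝ) :
    HasDerivAt (fun s => ∫ y in p..q, a y * u y s ^ 2)
      (∫ y in p..q, a y * (2 * u y t * deriv (u y) t)) t := by
  have huc := hu.continuous
  have hut (y s : ℝ) : HasDerivAt (u y) (deriv (u y) s) s :=
    ((hu.comp (contDiff_prodMk_right y)).differentiable one_ne_zero s).hasDerivAt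
  have hutc := continuous_deriv_right_of_contDiff_uncurry hu
  have ha_snd : ContinuousOn (fun z : ℝ × ℝ => a z.2) (Set.univ ×ˢ Set.uIcc p q) :=
    ha.comp continuousOn_snd fun z hz => hz.2
  have hderiv_cont : Continuous fun z : ℝ × ℝ => 2 * u z.2 z.1 * deriv (u z.2) z.1 :=
    (continuous_const.mul (huc.comp continuous_swap)).mul (hutc.comp continuous_swap)
  refine hasDerivAt_intervalIntegral_of_continuousOn
    (G' := fun s y => a y * (2 * u y s * deriv (u y) s)) Filter.univ_mem
    (fun s _ => ha.mul (by fun_prop)) (ha_snd.mul hderiv_cont.continuousOn) fun s _ y _ => ?_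
  simpa using ((hut y s).pow 2).const_mul (a y)

theorem hasDerivAt_integral_mul_sq_of_transport {a : ℝ → ℝ} {b p q t : ℝ} {u : ℝ → ℝ → ℝ}
    (ha : ContinuousOn a (Set.uIcc p q)) (hu : ContDiff ℝ 1 (fun z : ℝ × ℝ => u z.1 z.2))
    (hpde : ∀ y ∈ Set.uIcc p q,
      a y * deriv (fun s => u y s) t + b * deriv (fun z => u z t) y = 0) :
    HasDerivAt (fun s => ∫ y in p..q, a y * u y s ^ 2) (b * (u p t ^ 2 - u q t ^ 2)) t := by
  have hux : ContDiff ℝ 1 (fun z => u z t) := hu.comp (contDiff_prodMk_left t)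
  have hsq : ContDiff ℝ 1 (fun z => u z t ^ 2) := hux.pow 2
  refine (hasDerivAt_integral_mul_sq ha hu t).congr_deriv ?_
  calc ∫ y in p..q, a y * (2 * u y t * deriv (u y) t)
      = ∫ y in p..q, -b * deriv (fun z => u z t ^ 2) y := by
        refine intervalIntegral.integral_congr fun y hy => ?_
        have hderiv_sq := ((hux.differentiable one_ne_zero y).hasDerivAt.fun_pow 2).deriv
        simp only [hderiv_sq]
        linear_combination (2 * u y t) * hpde y hy
    _ = -b * (u q t ^ 2 - u p t ^ 2) := by
        rw [intervalIntegral.integral_const_mul, intervalIntegral.integral_deriv_eq_sub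
          (fun y _ => hsq.differentiable one_ne_zero y)
          ((hsq.continuous_deriv le_rfl).intervalIntegrable p q)]
    _ = b * (u p t ^ 2 - u q t ^ 2) := by ring

end Calculus

section Network

variable {V E : Type*} [DecidableEq V] {src tgt : E → V}

theorem vtxTrace_tgt (ℓ : E → ℝ) (u : E → ℝ → ℝ → ℝ) (e : E) (t : ℝ) :
    vtxTrace tgt ℓ u e (tgt e) t = u e (ℓ e) t :=
  if_pos rfl

theorem vtxTrace_src {e : E} (he : src e ≠ tgt e) (ℓ : E → ℝ) (u : E → ℝ → ℝ → ℝ) (t : ℝ) :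
    vtxTrace tgt ℓ u e (src e) t = u e 0 t :=
  if_neg he.symm

variable [Fintype E]

theorem incid_eq_zero_of_notMem_edgesAt {e : E} {v : V} (he : e ∉ edgesAt src tgt v) :
    incid src tgt e v = 0 := by
  simp_all [edgesAt, incid]

variable (src tgt) in
theorem sum_edgesAt_eq_sum_einEdges_sub_sum_eoutEdges (b : E → ℝ) (v : V) (f : E → ℝ) :
    ∑ e ∈ edgesAt src tgt v, b e * incid src tgt e v * f e
      = ∑ e ∈ einEdges src tgt b v, |b e * incid src tgt e v| * f e
        - ∑ e ∈ eoutEdges src tgt b v, |b e * incid src tgt e v| * f e := by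
  rw [einEdges, eoutEdges, sum_filter, sum_filter, ← sum_sub_distrib]
  refine sum_congr rfl fun e _ => ?_
  rcases lt_trichotomy (b e * incid src tgt e v) 0 with hneg | hzero | hpos
  · simp [hneg, hneg.not_gt, abs_of_neg]
  · simp [hzero]
  · simp [hpos, hpos.not_gt, abs_of_pos]

theorem sum_edgesAt_mul_sq_eq_of_mixing {b : E → ℝ} {v : V} {w : E → ℝ} {m : ℝ}
    (hcons : ∑ e ∈ edgesAt src tgt v, b e * incid src tgt e v = 0)
    (hcouple : ∀ e ∈ eoutEdges src tgt b v, w e = m)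
    (hmix : (∑ e ∈ einEdges src tgt b v, b e * incid src tgt e v) * m
      = ∑ e ∈ einEdges src tgt b v, b e * incid src tgt e v * w e) :
    ∑ e ∈ edgesAt src tgt v, b e * incid src tgt e v * w e ^ 2
      = ∑ e ∈ einEdges src tgt b v, |b e * incid src tgt e v| * (w e - m) ^ 2 := by
  have hin : ∑ e ∈ einEdges src tgt b v, |b e * incid src tgt e v| * (w e - m) = 0 := by
    rw [sum_mul] at hmix
    rw [← sub_eq_zero.mpr hmix.symm, ← sum_sub_distrib]
    refine sum_congr rfl fun e he => ?_
    rw [abs_of_pos (mem_filter.mp he).2, mul_sub]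
  have hfirst : ∑ e ∈ edgesAt src tgt v, b e * incid src tgt e v * (w e - m) = 0 := by
    rw [sum_edgesAt_eq_sum_einEdges_sub_sum_eoutEdges, hin, zero_sub, neg_eq_zero]
    exact sum_eq_zero fun e he => by rw [hcouple e he, sub_self, mul_zero]
  calc ∑ e ∈ edgesAt src tgt v, b e * incid src tgt e v * w e ^ 2
      = ∑ e ∈ edgesAt src tgt v, b e * incid src tgt e v * (w e - m) ^ 2
          + 2 * m * ∑ e ∈ edgesAt src tgt v, b e * incid src tgt e v * (w e - m)
          + m ^ 2 * ∑ e ∈ edgesAt src tgt v, b e * incid src tgt e v := by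
        rw [mul_sum, mul_sum, ← sum_add_distrib, ← sum_add_distrib]
        exact sum_congr rfl fun e _ => by ring
    _ = ∑ e ∈ edgesAt src tgt v, b e * incid src tgt e v * (w e - m) ^ 2 := by
        rw [hfirst, hcons, mul_zero, mul_zero, add_zero, add_zero]
    _ = ∑ e ∈ einEdges src tgt b v, |b e * incid src tgt e v| * (w e - m) ^ 2 := by
        rw [sum_edgesAt_eq_sum_einEdges_sub_sum_eoutEdges, sub_eq_self]
        exact sum_eq_zero fun e he => by rw [hcouple e he, sub_self, zero_pow two_ne_zero, mul_zero]

variable [Fintype V]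

variable (src tgt) in
theorem sum_sum_edgesAt_eq_sum_sub (b : E → ℝ) (φ : E → V → ℝ) :
    ∑ v, ∑ e ∈ edgesAt src tgt v, b e * incid src tgt e v * φ e v
      = ∑ e, b e * (φ e (tgt e) - φ e (src e)) := by
  have hextend (v : V) : ∑ e ∈ edgesAt src tgt v, b e * incid src tgt e v * φ e v
      = ∑ e, b e * incid src tgt e v * φ e v :=
    sum_subset (subset_univ _) fun e _ he => by
      rw [incid_eq_zero_of_notMem_edgesAt he, mul_zero, zero_mul]
  simp only [hextend]
  rw [sum_comm]
  refine sum_congr rfl fun e _ => ?_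
  simp [incid, mul_assoc, ← mul_sum, sub_mul]

theorem filter_edgesAt_eq_self_of_mem_bdryV {v : V} (hv : v ∈ bdryV src tgt) {P : E → Prop}
    [DecidablePred P] {e : E} (he : e ∈ edgesAt src tgt v) (hP : P e) :
    {e ∈ edgesAt src tgt v | P e} = edgesAt src tgt v := by
  have hcard : #(edgesAt src tgt v) ≤ 1 := Nat.lt_succ_iff.mp (mem_filter.mp hv).2
  exact filter_true_of_mem fun e' he' => card_le_one.mp hcard e he e' he' ▸ hP

theorem sum_bdryV_filter_exists_edgesAt (P : E → V → Prop)
    [∀ v, DecidablePred fun e => P e v] [DecidablePred fun v => ∃ e ∈ edgesAt src tgt v, P e v]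
    (f : E → V → ℝ) :
    ∑ v ∈ bdryV src tgt with ∃ e ∈ edgesAt src tgt v, P e v, ∑ e ∈ edgesAt src tgt v, f e v
      = ∑ v ∈ bdryV src tgt, ∑ e ∈ edgesAt src tgt v with P e v, f e v := by
  rw [sum_filter]
  refine sum_congr rfl fun v hv => ?_
  split_ifs with hP
  · obtain ⟨e, he, hPe⟩ := hP
    rw [filter_edgesAt_eq_self_of_mem_bdryV hv he hPe]
  · rw [filter_false_of_mem fun e he hPe => hP ⟨e, he, hPe⟩, sum_empty]

theorem sum_bdryV_edgesAt_eq_sum_outflowBdry_sub_sum_inflowBdry (b : E → ℝ) (f : E → V → ℝ) :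
    ∑ v ∈ bdryV src tgt, ∑ e ∈ edgesAt src tgt v, b e * incid src tgt e v * f e v
      = ∑ v ∈ outflowBdry src tgt b, ∑ e ∈ edgesAt src tgt v, |b e * incid src tgt e v| * f e v
        - ∑ v ∈ inflowBdry src tgt b, ∑ e ∈ edgesAt src tgt v,
            |b e * incid src tgt e v| * f e v := by
  rw [outflowBdry, inflowBdry, sum_bdryV_filter_exists_edgesAt, sum_bdryV_filter_exists_edgesAt,
    ← sum_sub_distrib]
  exact sum_congr rfl fun v _ => sum_edgesAt_eq_sum_einEdges_sub_sum_eoutEdges src tgt b v (f · v)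

variable (src tgt) in
theorem sum_innerV_add_sum_bdryV (f : V → ℝ) :
    ∑ v ∈ innerV src tgt, f v + ∑ v ∈ bdryV src tgt, f v = ∑ v, f v := by
  simp only [innerV, bdryV, ← not_le, sum_filter_add_sum_filter_not]

theorem eoutEdges_eq_edgesAt_of_mem_inflowBdry {b : E → ℝ} {v : V}
    (hv : v ∈ inflowBdry src tgt b) : eoutEdges src tgt b v = edgesAt src tgt v := by
  obtain ⟨hbdry, e, he, hneg⟩ := mem_filter.mp hv
  exact filter_edgesAt_eq_self_of_mem_bdryV hbdry he hneg

theorem hasDerivAt_sum_integral_mul_sq_of_transport (hloop : ∀ e, src e ≠ tgt e) {ℓ : E → ℝ}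
    (hℓ : ∀ e, 0 ≤ ℓ e) {a : E → ℝ → ℝ} (ha : ∀ e, ContinuousOn (a e) (Set.Icc 0 (ℓ e)))
    {b : E → ℝ} {u : E → ℝ → ℝ → ℝ} (hu : ∀ e, ContDiff ℝ 1 (fun p : ℝ × ℝ => u e p.1 p.2))
    {t : ℝ} (hpde : ∀ e, ∀ y ∈ Set.Icc 0 (ℓ e),
      a e y * deriv (fun s => u e y s) t + b e * deriv (fun z => u e z t) y = 0) :
    HasDerivAt (fun s => ∑ e, ∫ y in (0 : ℝ)..(ℓ e), a e y * u e y s ^ 2)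
      (-∑ v, ∑ e ∈ edgesAt src tgt v,
        b e * incid src tgt e v * vtxTrace tgt ℓ u e v t ^ 2) t := by
  simp only [← Set.uIcc_of_le (hℓ _)] at ha hpde
  refine (HasDerivAt.fun_sum fun e _ =>
    hasDerivAt_integral_mul_sq_of_transport (ha e) (hu e) (hpde e)).congr_deriv ?_
  rw [sum_sum_edgesAt_eq_sum_sub src tgt b fun e v => vtxTrace tgt ℓ u e v t ^ 2,
    ← sum_neg_distrib]
  refine sum_congr rfl fun e _ => ?_
  rw [vtxTrace_tgt, vtxTrace_src (hloop e), ← mul_neg, neg_sub]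

end Network

theorem stmt_16_general {V E : Type*} [Fintype V] [Fintype E] [DecidableEq V]
    (src tgt : E → V) (hloop : ∀ e, src e ≠ tgt e)
    (ℓ : E → ℝ) (hℓ : ∀ e, 0 ≤ ℓ e)
    (a : E → ℝ → ℝ) (ha : ∀ e, ContinuousOn (a e) (Set.Icc 0 (ℓ e)))
    (b : E → ℝ)
    (hcons : ∀ v ∈ innerV src tgt,
      ∑ e ∈ edgesAt src tgt v, b e * incid src tgt e v = 0)
    (u : E → ℝ → ℝ → ℝ) (hu : ∀ e, ContDiff ℝ 1 (fun p : ℝ × ℝ => u e p.1 p.2))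
    (t : ℝ) (uhat g : V → ℝ)
    (hpde : ∀ e, ∀ y ∈ Set.Icc 0 (ℓ e),
      a e y * deriv (fun s => u e y s) t + b e * deriv (fun z => u e z t) y = 0)
    (hcouple : ∀ v : V, ∀ e ∈ eoutEdges src tgt b v, vtxTrace tgt ℓ u e v t = uhat v)
    (hinflow : ∀ v ∈ inflowBdry src tgt b, uhat v = g v)
    (hmix : ∀ v ∈ innerV src tgt,
      (∑ e ∈ einEdges src tgt b v, b e * incid src tgt e v) * uhat v
        = ∑ e ∈ einEdges src tgt b v, b e * incid src tgt e v * vtxTrace tgt ℓ u e v t) :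
    HasDerivAt (fun s => ∑ e : E, ∫ y in (0 : ℝ)..(ℓ e), a e y * u e y s ^ 2)
      (-(∑ v ∈ outflowBdry src tgt b, ∑ e ∈ edgesAt src tgt v,
          |b e * incid src tgt e v| * vtxTrace tgt ℓ u e v t ^ 2)
        + (∑ v ∈ inflowBdry src tgt b, ∑ e ∈ edgesAt src tgt v,
          |b e * incid src tgt e v| * g v ^ 2)
        - ∑ v ∈ innerV src tgt, ∑ e ∈ einEdges src tgt b v,
          |b e * incid src tgt e v| * (vtxTrace tgt ℓ u e v t - uhat v) ^ 2) t := by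
  have hinner : ∀ v ∈ innerV src tgt,
      ∑ e ∈ edgesAt src tgt v, b e * incid src tgt e v * vtxTrace tgt ℓ u e v t ^ 2
        = ∑ e ∈ einEdges src tgt b v,
            |b e * incid src tgt e v| * (vtxTrace tgt ℓ u e v t - uhat v) ^ 2 :=
    fun v hv => sum_edgesAt_mul_sq_eq_of_mixing (hcons v hv) (hcouple v) (hmix v hv)
  have htrace : ∀ v ∈ inflowBdry src tgt b, ∀ e ∈ edgesAt src tgt v,
      vtxTrace tgt ℓ u e v t = g v := fun v hv e he => by
    rw [← eoutEdges_eq_edgesAt_of_mem_inflowBdry hv] at he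
    exact (hcouple v e he).trans (hinflow v hv)
  have hin : ∑ v ∈ inflowBdry src tgt b, ∑ e ∈ edgesAt src tgt v,
        |b e * incid src tgt e v| * vtxTrace tgt ℓ u e v t ^ 2
      = ∑ v ∈ inflowBdry src tgt b, ∑ e ∈ edgesAt src tgt v,
        |b e * incid src tgt e v| * g v ^ 2 :=
    sum_congr rfl fun v hv => sum_congr rfl fun e he => by rw [htrace v hv e he]
  refine (hasDerivAt_sum_integral_mul_sq_of_transport hloop hℓ ha hu hpde).congr_deriv ?_
  rw [← sum_innerV_add_sum_bdryV src tgt, sum_congr rfl hinner,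
    sum_bdryV_edgesAt_eq_sum_outflowBdry_sub_sum_inflowBdry, hin]
  ring

/-- Energy identity for transport on a network: for a classical solution of the network
transport problem, the energy is dissipated at the outflow boundary vertices and, through
mixing, at the inner junctions, and is fed in at the inflow boundary vertices. -/
theorem stmt_16 {V E : Type*} [Fintype V] [Fintype E] [DecidableEq V] [DecidableEq E]
    (src tgt : E → V) (hloop : ∀ e, src e ≠ tgt e)
    (ℓ : E → ℝ) (hℓ : ∀ e, 0 < ℓ e)
    (a : E → ℝ → ℝ) (a₀ : ℝ) (ha₀ : 0 < a₀)
    (ha : ∀ e, ContinuousOn (a e) (Set.Icc 0 (ℓ e)))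
    (haa : ∀ e, ∀ y ∈ Set.Icc 0 (ℓ e), a₀ ≤ a e y)
    (b : E → ℝ) (hb : ∀ e, b e ≠ 0)
    (hcons : ∀ v ∈ innerV src tgt,
      ∑ e ∈ edgesAt src tgt v, b e * incid src tgt e v = 0)
    (T : ℝ) (hT : 0 < T)
    (u : E → ℝ → ℝ → ℝ) (uhat : V → ℝ → ℝ) (g : V → ℝ → ℝ)
    (hg : ∀ v, ContinuousOn (g v) (Set.Icc 0 T))
    (hu : ∀ e, ContDiff ℝ 1 (fun p : ℝ × ℝ => u e p.1 p.2))
    (huhat : ∀ v, ContinuousOn (uhat v) (Set.Icc 0 T))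
    (hpde : ∀ e, ∀ y ∈ Set.Icc 0 (ℓ e), ∀ t ∈ Set.Icc 0 T,
      a e y * deriv (fun s => u e y s) t + b e * deriv (fun z => u e z t) y = 0)
    (hcouple : ∀ v : V, ∀ e ∈ eoutEdges src tgt b v, ∀ t ∈ Set.Icc 0 T,
      vtxTrace tgt ℓ u e v t = uhat v t)
    (hinflow : ∀ v ∈ inflowBdry src tgt b, ∀ t ∈ Set.Icc 0 T, uhat v t = g v t)
    (hmix : ∀ v ∈ innerV src tgt ∪ outflowBdry src tgt b, ∀ t ∈ Set.Icc 0 T,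
      (∑ e ∈ einEdges src tgt b v, b e * incid src tgt e v) * uhat v t
        = ∑ e ∈ einEdges src tgt b v, b e * incid src tgt e v * vtxTrace tgt ℓ u e v t) :
    ∀ t ∈ Set.Icc 0 T,
      HasDerivAt (fun s => ∑ e : E, ∫ y in (0 : ℝ)..(ℓ e), a e y * u e y s ^ 2)
        (-(∑ v ∈ outflowBdry src tgt b, ∑ e ∈ edgesAt src tgt v,
            |b e * incid src tgt e v| * vtxTrace tgt ℓ u e v t ^ 2)
          + (∑ v ∈ inflowBdry src tgt b, ∑ e ∈ edgesAt src tgt v,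
            |b e * incid src tgt e v| * g v t ^ 2)
          - ∑ v ∈ innerV src tgt, ∑ e ∈ einEdges src tgt b v,
            |b e * incid src tgt e v| * (vtxTrace tgt ℓ u e v t - uhat v t) ^ 2) t :=
  fun t ht => stmt_16_general src tgt hloop ℓ (fun e => (hℓ e).le) a ha b hcons u hu t
    (uhat · t) (g · t) (fun e y hy => hpde e y hy t ht) (fun v e he => hcouple v e he t ht)
    (fun v hv => hinflow v hv t ht) (fun v hv => hmix v (mem_union_left _ hv) t ht)
end

section
/- Let b > 0, T > 0, k ≥ 0, let a : [0,ℓ] → ℝ be continuous with a > 0, let 0 = x₀ < ⋯ < x_M = ℓ be a grid, let g : [0,T] → ℝ be continuous, and for i = 1,…,M let u_i : [x_{i−1},x_i] × [0,T] → ℝ be continuously differentiable in t with u_i(·,t) a polynomial of degree ≤ k in x for each t. Define û₀(t) = g(t) and û_i(t) = u_i(x_i,t) for i = 1,…,M, and assume that for each i, each t, and every polynomial w of degree ≤ k: ∫_{x_{i−1}}^{x_i} a ∂_t u_i(x,t) w(x) dx − ∫_{x_{i−1}}^{x_i} b u_i(x,t) w'(x) dx + b u_i(x_i,t) w(x_i)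 − b û_{i−1}(t) w(x_{i−1}) = 0. Then for all t ∈ [0,T]: d/dt Σ_{i=1}^M ∫_{x_{i−1}}^{x_i} a(x) u_i(x,t) dx = b g(t) − b u_M(ℓ,t), i.e. the discrete total mass changes only through the inflow and outflow fluxes. -/
/-!
Testing the scheme on one element with `w ≡ 1` says that `∫ a ∂ₜuᵢ` is the flux entering through the
left end of the element minus the flux leaving through the right end, and the sum over the elements
telescopes. It remains to differentiate the element masses under the integral sign. As the trial
space is finite-dimensional, it is closed for pointwise convergence and every linear functional on
it, the mass among them, is continuous for pointwise convergence. Applied to difference quotients,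
this shows that the pointwise derivative of a curve of trial functions is again a trial function and
that the functional commutes with differentiation; no domination is needed.
-/

open Filter MeasureTheory Polynomial Topology

section FiniteDimensional

variable {𝕜 X E F : Type*} [NontriviallyNormedField 𝕜] [CompleteSpace 𝕜]
  [NormedAddCommGroup E] [NormedSpace 𝕜 E] [NormedAddCommGroup F] [NormedSpace 𝕜 F]
  {V : Submodule 𝕜 (X → F)} [FiniteDimensional 𝕜 V] {t : 𝕜}

theorem mem_of_forall_hasDerivAt_apply {v : 𝕜 → X → F} {v' : X → F} (hvV : ∀ s, v s ∈ V)
    (hv : ∀ x, HasDerivAt (fun s => v s x) (v' x) t) : v' ∈ V := by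
  have hslope : Tendsto (slope v t) (𝓝[≠] t) (𝓝 v') :=
    tendsto_pi_nhds.2 fun x => (hv x).tendsto_slope
  exact V.closed_of_finiteDimensional.mem_of_tendsto hslope <|
    .of_forall fun s => V.smul_mem _ (V.sub_mem (hvV s) (hvV t))

theorem hasDerivAt_linearMap_of_forall_hasDerivAt_apply (Φ : V →ₗ[𝕜] E) {v : 𝕜 → V} {v' : V}
    (hv : ∀ x, HasDerivAt (fun s => (v s : X → F) x) ((v' : X → F) x) t) :
    HasDerivAt (fun s => Φ (v s)) (Φ v') t := by
  have hslope : Tendsto (slope v t) (𝓝[≠] t) (𝓝 v') :=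
    tendsto_subtype_rng.2 <| tendsto_pi_nhds.2 fun x => (hv x).tendsto_slope
  have hΦslope : slope (fun s => Φ (v s)) t = Φ ∘ slope v t := by
    ext s
    simp [slope_def_module]
  rw [hasDerivAt_iff_tendsto_slope, hΦslope]
  exact (Φ.continuous_of_finiteDimensional.tendsto v').comp hslope

end FiniteDimensional

section Integral

variable {𝕜 F : Type*} [NontriviallyNormedField 𝕜] [CompleteSpace 𝕜] [NormedAddCommGroup F]
  [NormedSpace ℝ F] [NormedSpace 𝕜 F] [SMulCommClass ℝ 𝕜 F] {t : 𝕜}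

theorem hasDerivAt_integral_of_finiteDimensional {X : Type*} [MeasurableSpace X] {μ : Measure X}
    {V : Submodule 𝕜 (X → F)} [FiniteDimensional 𝕜 V] (hV : ∀ φ ∈ V, Integrable φ μ)
    {v : 𝕜 → X → F} {v' : X → F} (hvV : ∀ s, v s ∈ V)
    (hv : ∀ y, HasDerivAt (fun s => v s y) (v' y) t) :
    HasDerivAt (fun s => ∫ y, v s y ∂μ) (∫ y, v' y ∂μ) t := by
  let integralₗ : V →ₗ[𝕜] F :=
    { toFun φ := ∫ y, (φ : X → F) y ∂μ
      map_add' φ ψ := integral_add (hV φ φ.2) (hV ψ ψ.2)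
      map_smul' c φ := integral_smul c (φ : X → F) }
  exact hasDerivAt_linearMap_of_forall_hasDerivAt_apply integralₗ
    (v := fun s => ⟨v s, hvV s⟩) (v' := ⟨v', mem_of_forall_hasDerivAt_apply hvV hv⟩) hv

theorem hasDerivAt_intervalIntegral_of_finiteDimensional {μ : Measure ℝ} {c d : ℝ}
    {V : Submodule 𝕜 (ℝ → F)} [FiniteDimensional 𝕜 V] (hV : ∀ φ ∈ V, IntervalIntegrable φ μ c d)
    {v : 𝕜 → ℝ → F} {v' : ℝ → F} (hvV : ∀ s, v s ∈ V)
    (hv : ∀ y, HasDerivAt (fun s => v s y) (v' y) t) :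
    HasDerivAt (fun s => ∫ y in c..d, v s y ∂μ) (∫ y in c..d, v' y ∂μ) t :=
  (hasDerivAt_integral_of_finiteDimensional (fun φ hφ => (hV φ hφ).1) hvV hv).sub
    (hasDerivAt_integral_of_finiteDimensional (fun φ hφ => (hV φ hφ).2) hvV hv)

end Integral

theorem hasDerivAt_intervalIntegral_mul_of_finiteDimensional {𝕜 : Type*} [RCLike 𝕜]
    {μ : Measure ℝ} {c d : ℝ} {a : ℝ → 𝕜} {V : Submodule 𝕜 (ℝ → 𝕜)} [FiniteDimensional 𝕜 V]
    (hV : ∀ φ ∈ V, IntervalIntegrable (fun y => a y * φ y) μ c d)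
    {v : 𝕜 → ℝ → 𝕜} {v' : ℝ → 𝕜} {t : 𝕜} (hvV : ∀ s, v s ∈ V)
    (hv : ∀ y, HasDerivAt (fun s => v s y) (v' y) t) :
    HasDerivAt (fun s => ∫ y in c..d, a y * v s y ∂μ) (∫ y in c..d, a y * v' y ∂μ) t :=
  hasDerivAt_intervalIntegral_of_finiteDimensional (V := V.map (LinearMap.mulLeft 𝕜 a))
    (by rintro _ ⟨φ, hφ, rfl⟩; exact hV φ hφ)
    (fun s => Submodule.mem_map_of_mem (hvV s)) (fun y => (hv y).const_mul (a y))

section PolynomialFunctions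

/-- The functions on `R` given by polynomials of degree less than `n`: the local trial space of the
discontinuous Galerkin method of order `k` when `n = k + 1`, as a space of functions. -/
noncomputable def polynomialFunctionsLT (R : Type*) [Semiring R] (n : ℕ) : Submodule R (R → R) :=
  (degreeLT R n).map (LinearMap.pi leval)

variable {R : Type*} [Semiring R] {n : ℕ} {f : R → R}

theorem mem_polynomialFunctionsLT :
    f ∈ polynomialFunctionsLT R n ↔ ∃ p : R[X], p.degree < n ∧ ∀ y, f y = p.eval y := by
  simp only [polynomialFunctionsLT, Submodule.mem_map, mem_degreeLT, funext_iff,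
    LinearMap.pi_apply, leval_apply, eq_comm]

instance : Module.Finite R (polynomialFunctionsLT R n) :=
  inferInstanceAs (Module.Finite R ((degreeLT R n).map _))

theorem continuous_of_mem_polynomialFunctionsLT [TopologicalSpace R] [IsTopologicalSemiring R]
    (hf : f ∈ polynomialFunctionsLT R n) : Continuous f := by
  obtain ⟨p, -, hp⟩ := mem_polynomialFunctionsLT.1 hf
  exact p.continuous.congr fun y => (hp y).symm

end PolynomialFunctions

theorem hasDerivAt_sum_range_of_flux {𝕜 E : Type*} [NontriviallyNormedField 𝕜]
    [NormedAddCommGroup E] [NormedSpace 𝕜 E] {M : ℕ} {m : ℕ → 𝕜 → E} {flux : ℕ → E} {t : 𝕜}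
    (hm : ∀ i < M, HasDerivAt (m i) (flux i - flux (i + 1)) t) :
    HasDerivAt (fun s => ∑ i ∈ Finset.range M, m i s) (flux 0 - flux M) t := by
  rw [← Finset.sum_range_sub']
  exact HasDerivAt.fun_sum fun i hi => hm i (Finset.mem_range.1 hi)

theorem Icc_subset_Icc_of_forall_le_add_one {α : Type*} [Preorder α] {M : ℕ} {x : ℕ → α}
    (hx : ∀ i < M, x i ≤ x (i + 1)) {i : ℕ} (hi : i < M) :
    Set.Icc (x i) (x (i + 1)) ⊆ Set.Icc (x 0) (x M) := by
  have hmono : MonotoneOn x (Set.Iic M) :=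
    monotoneOn_of_le_add_one Set.ordConnected_Iic fun j _ _ hj => hx j hj
  exact Set.Icc_subset_Icc (hmono M.zero_le hi.le i.zero_le) (hmono hi Set.self_mem_Iic hi)

/-- The hybrid unknown `û i t` at the grid point `x i` for flow in positive direction: the inflow
datum at `x 0`, and the trace from the left element at every later grid point. The element
`[x i, x (i + 1)]` carries the index `i`. -/
def upwindTrace (x : ℕ → ℝ) (g : ℝ → ℝ) (u : ℕ → ℝ → ℝ → ℝ) (i : ℕ) (t : ℝ) : ℝ :=
  if i = 0 then g t else u (i - 1) (x i) t

theorem stmt_18_general {b t : ℝ} {a : ℝ → ℝ} {M : ℕ} {x : ℕ → ℝ} {g : ℝ → ℝ}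
    {u : ℕ → ℝ → ℝ → ℝ} (V : ℕ → Submodule ℝ (ℝ → ℝ)) [∀ i, FiniteDimensional ℝ (V i)]
    (haV : ∀ i < M, ∀ φ ∈ V i, IntervalIntegrable (fun y => a y * φ y) volume (x i) (x (i + 1)))
    (huV : ∀ i < M, ∀ s, (fun y => u i y s) ∈ V i)
    (hu : ∀ i < M, ∀ y, DifferentiableAt ℝ (u i y) t)
    (hbalance : ∀ i < M, ∫ y in x i..x (i + 1), a y * deriv (u i y) t =
      b * upwindTrace x g u i t - b * u i (x (i + 1)) t) :
    HasDerivAt (fun s => ∑ i ∈ Finset.range M, ∫ y in x i..x (i + 1), a y * u i y s)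
      (b * g t - b * upwindTrace x g u M t) t := by
  refine hasDerivAt_sum_range_of_flux (flux := fun i => b * upwindTrace x g u i t) fun i hi => ?_
  have hmass := hasDerivAt_intervalIntegral_mul_of_finiteDimensional (haV i hi) (huV i hi)
    fun y => (hu i hi y).hasDerivAt
  rwa [hbalance i hi] at hmass

/-- Discrete conservation property for the hybrid dG semi-discretization of the transport
equation on a single edge `[0,ℓ]` with flow in positive direction (`b > 0`) and inflow
data `g`: the discrete total mass changes only through the inflow and outflow fluxes.
The hybrid values are `g t` at the inflow vertex and the upwind traces
`u (i-1) (x i) t` at the remaining grid points. -/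
theorem stmt_18 (b ℓ T : ℝ) (hb : 0 < b) (hT : 0 < T) (k : ℕ)
    (a : ℝ → ℝ) (ha : ContinuousOn a (Set.Icc 0 ℓ))
    (hapos : ∀ y ∈ Set.Icc 0 ℓ, 0 < a y)
    (M : ℕ) (hM : 1 ≤ M) (x : ℕ → ℝ) (hx0 : x 0 = 0) (hxM : x M = ℓ)
    (hmono : ∀ i < M, x i < x (i + 1))
    (g : ℝ → ℝ) (hg : ContinuousOn g (Set.Icc 0 T))
    (u : ℕ → ℝ → ℝ → ℝ)
    (hsm : ∀ i < M, ∀ y, ContDiff ℝ 1 (fun t => u i y t))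
    (hpoly : ∀ i < M, ∀ t, ∃ p : Polynomial ℝ,
      p.natDegree ≤ k ∧ ∀ y, u i y t = Polynomial.eval y p)
    (hscheme : ∀ t ∈ Set.Icc 0 T, ∀ i < M, ∀ w : Polynomial ℝ, w.natDegree ≤ k →
      (∫ y in x i..x (i + 1), a y * deriv (fun s => u i y s) t * Polynomial.eval y w)
        - (∫ y in x i..x (i + 1), b * u i y t * Polynomial.eval y (Polynomial.derivative w))
        + b * u i (x (i + 1)) t * Polynomial.eval (x (i + 1)) w
        - b * (if i = 0 then g t else u (i - 1) (x i) t) * Polynomial.eval (x i) w = 0) :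
    ∀ t ∈ Set.Icc 0 T,
      HasDerivAt
        (fun s => ∑ i ∈ Finset.range M, ∫ y in x i..x (i + 1), a y * u i y s)
        (b * g t - b * u (M - 1) ℓ t) t := by
  intro t ht
  obtain ⟨n, rfl⟩ := Nat.exists_eq_add_of_le' hM
  subst hxM
  rw [← hx0] at ha
  refine stmt_18_general (fun _ => polynomialFunctionsLT ℝ (k + 1)) (fun i hi φ hφ => ?_)
    (fun i hi s => ?_) (fun i hi y => (hsm i hi y).differentiable_one t) (fun i hi => ?_)
  · have hcell := Icc_subset_Icc_of_forall_le_add_one (fun j hj => (hmono j hj).le) hi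
    exact ((ha.mono hcell).mul (continuous_of_mem_polynomialFunctionsLT hφ).continuousOn)
      |>.intervalIntegrable_of_Icc (hmono i hi).le
  · obtain ⟨p, hpk, hp⟩ := hpoly i hi s
    have hdeg : p.degree < (k + 1 : ℕ) :=
      degree_le_natDegree.trans_lt (mod_cast Nat.lt_succ_of_le hpk)
    exact mem_polynomialFunctionsLT.2 ⟨p, hdeg, hp⟩
  · have htest := hscheme t ht i hi 1 (by simp)
    simp only [eval_one, derivative_one, eval_zero, mul_one, mul_zero,
      intervalIntegral.integral_zero, sub_zero] at htest
    unfold upwindTrace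
    linarith
end
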